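/- Let d ≥ 1, let ρ > 0 and C_L > 0. Then there exist constants Ĉ > 0, C ≥ Ĉ², and μ > 0 such that the 2d×2d block matrices P = [[I_d, Ĉ I_d], [Ĉ I_d, C I_d]] and K = [[2Ĉ I_d, (C − C_L² + ρĈ) I_d], [(C − C_L² + ρĈ) I_d, (2ρC − 2C_L²Ĉ) I_d]] satisfy K ⪰ 2μP ⪰ 0 in the Loewner (positive-semidefinite) order. Specifically, one may take Ĉ = ρ/2 together with C = C_L² when ρ < 2C_L, and C = ρ²/2 − C_L² when ρ ≥ 2C_L. -/

import Mathlib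

open Matrix

lemma scalar_quad {a b e : ℝ} (ha : 0 ≤ a) (he : 0 ≤ e) (h : b ^ 2 ≤ a * e) (x y : ℝ) :
    0 ≤ a * x ^ 2 + 2 * b * x * y + e * y ^ 2 := by
  rcases ha.eq_or_lt with h0 | h0
  · subst h0
    have hb : b = 0 := by nlinarith [sq_nonneg b]
    subst hb
    have := mul_nonneg he (sq_nonneg y)
    linarith
  · have h1 : 0 ≤ a * (a * x ^ 2 + 2 * b * x * y + e * y ^ 2) := by
      nlinarith [sq_nonneg (a * x + b * y), mul_nonneg (sub_nonneg.2 h) (sq_nonneg y)]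
    exact nonneg_of_mul_nonneg_right h1 h0

lemma block_psd (d : ℕ) {a b e : ℝ} (ha : 0 ≤ a) (he : 0 ≤ e) (h : b ^ 2 ≤ a * e) :
    (Matrix.fromBlocks (a • (1 : Matrix (Fin d) (Fin d) ℝ)) (b • (1 : Matrix (Fin d) (Fin d) ℝ))
      (b • (1 : Matrix (Fin d) (Fin d) ℝ)) (e • (1 : Matrix (Fin d) (Fin d) ℝ))).PosSemidef := by
  refine Matrix.PosSemidef.of_dotProduct_mulVec_nonneg ?_ ?_
  · simp [Matrix.IsHermitian, Matrix.fromBlocks_transpose]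
  · intro x
    have : star x ⬝ᵥ (Matrix.fromBlocks (a • (1 : Matrix (Fin d) (Fin d) ℝ))
      (b • (1 : Matrix (Fin d) (Fin d) ℝ))
      (b • (1 : Matrix (Fin d) (Fin d) ℝ)) (e • (1 : Matrix (Fin d) (Fin d) ℝ)) *ᵥ x)
      = ∑ i, (a * x (Sum.inl i) ^ 2 + 2 * b * x (Sum.inl i) * x (Sum.inr i)
          + e * x (Sum.inr i) ^ 2) := by
      rw [Matrix.fromBlocks_mulVec]
      simp only [dotProduct, Fintype.sum_sum_type, ← Finset.sum_add_distrib]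
      refine Finset.sum_congr rfl fun i _ => ?_
      simp [Matrix.smul_mulVec]
      ring
    rw [this]
    exact Finset.sum_nonneg fun i _ => scalar_quad ha he h _ _

lemma block_psd_P (d : ℕ) {m b e : ℝ} (hm : 0 ≤ m) (h : b ^ 2 ≤ e) :
    (m • Matrix.fromBlocks (1 : Matrix (Fin d) (Fin d) ℝ) (b • (1 : Matrix (Fin d) (Fin d) ℝ))
      (b • (1 : Matrix (Fin d) (Fin d) ℝ)) (e • (1 : Matrix (Fin d) (Fin d) ℝ))).PosSemidef := by
  have := block_psd d (a := 1) (b := b) (e := e) zero_le_one ((sq_nonneg b).trans h) (by linarith)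
  rw [one_smul] at this
  exact this.smul hm

lemma block_psd_KP (d : ℕ) {m b e p q r : ℝ} (h1 : 0 ≤ p - m) (h2 : 0 ≤ r - m * e)
    (h : (q - m * b) ^ 2 ≤ (p - m) * (r - m * e)) :
    (Matrix.fromBlocks (p • (1 : Matrix (Fin d) (Fin d) ℝ)) (q • (1 : Matrix (Fin d) (Fin d) ℝ))
      (q • (1 : Matrix (Fin d) (Fin d) ℝ)) (r • (1 : Matrix (Fin d) (Fin d) ℝ))
     - m • Matrix.fromBlocks (1 : Matrix (Fin d) (Fin d) ℝ) (b • (1 : Matrix (Fin d) (Fin d) ℝ))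
      (b • (1 : Matrix (Fin d) (Fin d) ℝ)) (e • (1 : Matrix (Fin d) (Fin d) ℝ))).PosSemidef := by
  have := block_psd d h1 h2 h
  convert this using 1
  rw [Matrix.fromBlocks_smul, sub_eq_add_neg, Matrix.fromBlocks_neg, Matrix.fromBlocks_add]
  simp only [smul_smul, sub_eq_add_neg, add_smul, neg_smul]


/-- Lemma 8 of the paper: for `ρ > 0` and `C_L > 0` there exist constants
`Ĉ > 0`, `C ≥ Ĉ²`, `μ > 0` — specifically `Ĉ = ρ/2` together with `C = C_L²` when
`ρ < 2C_L` and `C = ρ²/2 - C_L²` when `ρ ≥ 2C_L` — such that the block matrices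
`P = [[I, ĈI],[ĈI, CI]]` and `K = [[2ĈI, (C - C_L² + ρĈ)I],[(C - C_L² + ρĈ)I, (2ρC - 2C_L²Ĉ)I]]`
satisfy `K ⪰ 2μP ⪰ 0` in the Loewner order. -/
theorem stmt12 (d : ℕ) (hd : 1 ≤ d) (ρ CL : ℝ) (hρ : 0 < ρ) (hCL : 0 < CL) :
    ∃ Ch C μ : ℝ,
      Ch = ρ / 2 ∧
      (ρ < 2 * CL → C = CL ^ 2) ∧
      (2 * CL ≤ ρ → C = ρ ^ 2 / 2 - CL ^ 2) ∧
      0 < Ch ∧ Ch ^ 2 ≤ C ∧ 0 < μ ∧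
      (Matrix.fromBlocks
          ((2 * Ch) • (1 : Matrix (Fin d) (Fin d) ℝ))
          ((C - CL ^ 2 + ρ * Ch) • (1 : Matrix (Fin d) (Fin d) ℝ))
          ((C - CL ^ 2 + ρ * Ch) • (1 : Matrix (Fin d) (Fin d) ℝ))
          ((2 * ρ * C - 2 * CL ^ 2 * Ch) • (1 : Matrix (Fin d) (Fin d) ℝ))
        - (2 * μ) • Matrix.fromBlocks
          (1 : Matrix (Fin d) (Fin d) ℝ)
          (Ch • (1 : Matrix (Fin d) (Fin d) ℝ))
          (Ch • (1 : Matrix (Fin d) (Fin d) ℝ))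
          (C • (1 : Matrix (Fin d) (Fin d) ℝ))).PosSemidef ∧
      ((2 * μ) • Matrix.fromBlocks
          (1 : Matrix (Fin d) (Fin d) ℝ)
          (Ch • (1 : Matrix (Fin d) (Fin d) ℝ))
          (Ch • (1 : Matrix (Fin d) (Fin d) ℝ))
          (C • (1 : Matrix (Fin d) (Fin d) ℝ))).PosSemidef := by
  by_cases hc : ρ < 2 * CL
  · have hC : (ρ / 2) ^ 2 ≤ CL ^ 2 := by nlinarith
    refine ⟨ρ / 2, CL ^ 2, ρ / 2, rfl, fun _ => rfl, fun h => absurd hc (not_lt.2 h), by positivity,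
      hC, by positivity, block_psd_KP d (le_of_eq (by ring)) (le_of_eq (by ring))
        (le_of_eq (by ring)), block_psd_P d (by positivity) hC⟩
  · have hc' := not_lt.1 hc
    have hs : 4 * CL ^ 2 ≤ ρ ^ 2 := by nlinarith
    have hC : (ρ / 2) ^ 2 ≤ ρ ^ 2 / 2 - CL ^ 2 := by nlinarith
    obtain ⟨m, hm⟩ : ∃ m, m = CL ^ 2 / ρ := ⟨_, rfl⟩
    have hm0 : 0 < m := by rw [hm]; positivity
    have hmc : CL ^ 2 = m * ρ := by rw [hm]; field_simp
    have hmρ : 4 * m ≤ ρ := by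
      rw [hmc] at hs
      nlinarith
    refine ⟨ρ / 2, ρ ^ 2 / 2 - CL ^ 2, m, rfl, fun h => absurd h hc, fun _ => rfl, by positivity,
      hC, hm0, block_psd_KP d (by linarith) ?_ ?_, block_psd_P d (by positivity) hC⟩
    · rw [hmc]
      have : 0 ≤ ρ * (ρ ^ 2 - 4 * m * ρ + 2 * m ^ 2) := by
        apply mul_nonneg hρ.le
        nlinarith
      nlinarith
    · rw [hmc]
      have : 0 ≤ m ^ 2 * (ρ * (ρ - 4 * m)) :=
        mul_nonneg (sq_nonneg m) (mul_nonneg hρ.le (by linarith))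
      nlinarith
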